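/- Let D be an integral domain and ⋆ a semistar operation on D. The following are equivalent: (1) D is ⋆-Noetherian and a Prüfer ⋆-multiplication domain; (2) the set { F^⋆̃ : F a nonzero fractional ideal of D } is a group under the multiplication F^⋆̃ × G^⋆̃ := (FG)^⋆̃ (with identity D^⋆̃); (3) every nonzero fractional ideal of D is quasi-⋆̃-invertible; (4) every nonzero integral ideal of D is quasi-⋆̃-invertible. -/

import Mathlib

open scoped Pointwise

section SemistarDefs

variable {D : Type*} [CommRing D] [IsDomain D]
variable {K : Type*} [Field K] [Algebra D K] [IsFractionRing D K]

/-- `star` is a semistar operation on the integral domain `D` with quotient field `K`: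
a map on (nonzero) `D`-submodules of `K` satisfying `(xE)^⋆ = x·E^⋆`, monotonicity,
extensivity and idempotence. -/
structure IsSemistarOperation (star : Submodule D K → Submodule D K) : Prop where
  ne_bot : ∀ {E : Submodule D K}, E ≠ ⊥ → star E ≠ ⊥
  map_smul : ∀ (x : K), x ≠ 0 → ∀ {E : Submodule D K}, E ≠ ⊥ →
    star (Submodule.map (LinearMap.mulLeft D x) E) = Submodule.map (LinearMap.mulLeft D x) (star E)
  mono : ∀ {E F : Submodule D K}, E ≠ ⊥ → F ≠ ⊥ → E ≤ F → star E ≤ star F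
  le_star : ∀ {E : Submodule D K}, E ≠ ⊥ → E ≤ star E
  star_star : ∀ {E : Submodule D K}, E ≠ ⊥ → star (star E) = star E

/-- The image in `K` of an ideal `I` of `D`, as a `D`-submodule of `K`. -/
def idealExt (K : Type*) [Field K] [Algebra D K] (I : Ideal D) : Submodule D K :=
  Submodule.map (Algebra.linearMap D K) I

/-- `I` is a quasi-⋆-ideal: a nonzero ideal of `D` with `I = I^⋆ ∩ D`. -/
def QuasiStarIdeal (star : Submodule D K → Submodule D K) (I : Ideal D) : Prop :=
  I ≠ ⊥ ∧ Submodule.comap (Algebra.linearMap D K) (star (idealExt K I)) = I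

/-- `P` is a quasi-⋆-prime: a prime ideal which is a quasi-⋆-ideal. -/
def QuasiStarPrime (star : Submodule D K → Submodule D K) (P : Ideal D) : Prop :=
  P.IsPrime ∧ QuasiStarIdeal star P

/-- `M` is a quasi-⋆-maximal ideal: maximal in the set of proper quasi-⋆-ideals of `D`. -/
def QuasiStarMaximal (star : Submodule D K → Submodule D K) (M : Ideal D) : Prop :=
  QuasiStarIdeal star M ∧ M ≠ ⊤ ∧
    ∀ J : Ideal D, QuasiStarIdeal star J → J ≠ ⊤ → M ≤ J → J = M

/-- The finite-type semistar operation `⋆_f` associated to `⋆`: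
`E^{⋆_f} = ⋃ { F^⋆ : F nonzero finitely generated, F ⊆ E }`. -/
def finTypeOp (star : Submodule D K → Submodule D K) : Submodule D K → Submodule D K :=
  fun E => ⨆ (F : Submodule D K) (_ : F ≠ ⊥) (_ : F.FG) (_ : F ≤ E), star F

/-- The extension `E·D_Q` of a `D`-submodule `E` of `K` to the localization of `D` at
(the complement of) `Q`, described as `{ x ∈ K : s·x ∈ E for some s ∉ Q }`. -/
def extendToPrime (Q : Ideal D) (E : Submodule D K) : Submodule D K :=
  Submodule.span D {x : K | ∃ s : D, s ∉ Q ∧ algebraMap D K s * x ∈ E}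

/-- The stable semistar operation of finite type `⋆̃` associated to `⋆`:
`E^⋆̃ = ⋂ { E·D_Q : Q a quasi-⋆_f-maximal ideal of D }`. -/
def stableOp (star : Submodule D K → Submodule D K) : Submodule D K → Submodule D K :=
  fun E => ⨅ (Q : Ideal D) (_ : QuasiStarMaximal (finTypeOp star) Q), extendToPrime Q E

/-- A rank-one discrete valuation ring: a (domain which is a) local PID which is not a field. -/
def IsDVR (R : Type*) [CommRing R] : Prop :=
  ∃ h : IsDomain R, @IsDiscreteValuationRing R _ h

/-- A valuation domain. -/
def IsValuationDomain (R : Type*) [CommRing R] : Prop :=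
  ∃ h : IsDomain R, @ValuationRing R _ h

/-- `D` is a ⋆-almost Dedekind domain: `D_M` is a rank-one discrete valuation ring for
every quasi-⋆_f-maximal ideal `M` of `D`. -/
def StarADD (star : Submodule D K → Submodule D K) : Prop :=
  ∀ (M : Ideal D) [M.IsPrime], QuasiStarMaximal (finTypeOp star) M →
    IsDVR (Localization.AtPrime M)

/-- `D` is a Prüfer ⋆-multiplication domain: `D_M` is a valuation domain for every
quasi-⋆_f-maximal ideal `M` of `D`. -/
def StarPMD (star : Submodule D K → Submodule D K) : Prop :=
  ∀ (M : Ideal D) [M.IsPrime], QuasiStarMaximal (finTypeOp star) M →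
    IsValuationDomain (Localization.AtPrime M)

/-- `D` is ⋆-Noetherian: ascending chain condition on quasi-⋆-ideals. -/
def StarNoetherian (star : Submodule D K → Submodule D K) : Prop :=
  ∀ c : ℕ →o Ideal D, (∀ n, QuasiStarIdeal star (c n)) → ∃ n, ∀ m, n ≤ m → c m = c n

/-- `D` is a ⋆-Dedekind domain: ⋆-Noetherian and a P⋆MD. -/
def StarDedekind (star : Submodule D K → Submodule D K) : Prop :=
  StarNoetherian star ∧ StarPMD star

/-- `D` has the ⋆_f-finite character property: every nonzero element of `D` lies in only
finitely many quasi-⋆_f-maximal ideals. -/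
def StarFiniteCharacter (star : Submodule D K → Submodule D K) : Prop :=
  ∀ d : D, d ≠ 0 → {M : Ideal D | QuasiStarMaximal (finTypeOp star) M ∧ d ∈ M}.Finite

/-- The `v`-operation `E ↦ (D : (D : E))`. -/
def vOp : Submodule D K → Submodule D K := fun E => 1 / (1 / E)

/-- A nonzero `D`-submodule `E` of `K` is quasi-∗-invertible if `(E·(D^∗ : E))^∗ = D^∗`. -/
def QuasiStarInvertible (star : Submodule D K → Submodule D K) (E : Submodule D K) : Prop :=
  star (E * (star 1 / E)) = star (1 : Submodule D K)

/-- `D` has the ∗-cancellation law: for nonzero fractional ideals `A`, `B`, `C`,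
`(AB)^∗ = (AC)^∗` implies `B^∗ = C^∗`. -/
def StarCancellation (star : Submodule D K → Submodule D K) : Prop :=
  ∀ A B C : Submodule D K, A ≠ ⊥ → B ≠ ⊥ → C ≠ ⊥ →
    IsFractional (nonZeroDivisors D) A → IsFractional (nonZeroDivisors D) B →
    IsFractional (nonZeroDivisors D) C →
    star (A * B) = star (A * C) → star B = star C

/-- The ∗-dimension of `D`: the supremum of the lengths of chains of quasi-∗-prime ideals
of `D` (between `(0)` and a quasi-∗-prime). -/
noncomputable def starDim (star : Submodule D K → Submodule D K) : ℕ∞ :=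
  ⨆ (k : ℕ) (_ : ∃ c : Fin k → Ideal D, StrictMono c ∧ ∀ i, QuasiStarPrime star (c i)),
    (k : ℕ∞)

/-- A submodule `T` of `K` (containing the image of an integral domain with quotient
field `K`) is integrally closed (in `K`) if every `x ∈ K` satisfying a monic polynomial
equation with coefficients in `T` belongs to `T`. -/
def IntegrallyClosedSub (T : Submodule D K) : Prop :=
  ∀ x : K, (∃ (n : ℕ) (c : Fin n → K), (∀ i, c i ∈ T) ∧
    x ^ n = ∑ i : Fin n, c i * x ^ (i : ℕ)) → x ∈ T

/-- The content ideal `c(p)` of a polynomial: the ideal generated by its coefficients. -/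
def contentIdeal (p : Polynomial D) : Ideal D := Ideal.span (Set.range p.coeff)

/-- The multiplicative set `N(⋆) = { h ∈ D[X] : h ≠ 0, c(h)^⋆ = D^⋆ }` (as a submonoid,
via the closure of this multiplicatively closed set). -/
noncomputable def nagataMonoid (star : Submodule D K → Submodule D K) : Submonoid (Polynomial D) :=
  Submonoid.closure
    {p : Polynomial D | p ≠ 0 ∧ star (idealExt K (contentIdeal p)) = star (1 : Submodule D K)}

/-- The Nagata ring `Na(D,⋆) = D[X]_{N(⋆)}`. -/
abbrev NagataRing (star : Submodule D K → Submodule D K) :=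
  Localization (nagataMonoid star)

/-- `V` is a valuation overring of `D` (inside the quotient field `K`): `D ⊆ V ⊆ K` and
for every nonzero `x ∈ K`, `x ∈ V` or `x⁻¹ ∈ V`. -/
def IsValuationOverring (D : Type*) [CommRing D] {K : Type*} [Field K] [Algebra D K]
    (V : Subring K) : Prop :=
  (∀ d : D, algebraMap D K d ∈ V) ∧ ∀ x : K, x ≠ 0 → (x ∈ V ∨ x⁻¹ ∈ V)

/-- `V` is a ∗-valuation overring of `D`: a valuation overring such that `F^∗ ⊆ FV` for
every nonzero finitely generated `D`-submodule `F` of `K`. -/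
def IsStarValuationOverring (star : Submodule D K → Submodule D K) (V : Subring K) : Prop :=
  IsValuationOverring D V ∧
    ∀ F : Submodule D K, F ≠ ⊥ → F.FG →
      star F ≤ Submodule.span D ((F : Set K) * (V : Set K))

/-- `D` is a Krull domain: there is a family of rank-one discrete valuation overrings of `D`
with quotient field `K` whose intersection is `D`, with finite character. -/
def IsKrullDomain (D : Type*) [CommRing D] (K : Type*) [Field K] [Algebra D K] : Prop :=
  ∃ 𝒱 : Set (Subring K),
    (∀ V ∈ 𝒱, (∀ d : D, algebraMap D K d ∈ V) ∧ IsDVR V ∧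
      ∀ x : K, ∃ a ∈ V, ∃ b ∈ V, b ≠ 0 ∧ x * b = a) ∧
    (⋂ V ∈ 𝒱, (V : Set K)) = Set.range (algebraMap D K) ∧
    ∀ d : D, d ≠ 0 → {V ∈ 𝒱 | ¬ ∃ y ∈ V, algebraMap D K d * y = 1}.Finite

end SemistarDefs


section Helpers

set_option linter.unusedSectionVars false
set_option linter.unusedVariables false

variable {D : Type*} [CommRing D] [IsDomain D]
variable {K : Type*} [Field K] [Algebra D K] [IsFractionRing D K]

theorem fg_le_of_directed {R M ι : Type*} [CommRing R] [AddCommGroup M] [Module R M]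
    [Nonempty ι] (X : ι → Submodule R M) (hX : Directed (· ≤ ·) X) {F : Submodule R M}
    (hF : F.FG) (h : F ≤ iSup X) : ∃ i, F ≤ X i := by
  have hc := (Submodule.fg_iff_compact F).1 hF
  rw [CompleteLattice.isCompactElement_iff_le_of_directed_sSup_le] at hc
  obtain ⟨_, ⟨i, rfl⟩, hi⟩ := hc (Set.range X) (Set.range_nonempty X)
    (directedOn_range.2 hX) (by rwa [sSup_range])
  exact ⟨i, hi⟩

/-- Working form of the semistar axioms. -/
structure SSop (s : Submodule D K → Submodule D K) : Prop where
  mul_mem : ∀ (x : K) {E F : Submodule D K}, E ≠ ⊥ → F ≠ ⊥ → (∀ e ∈ E, x * e ∈ F) →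
    ∀ y ∈ s E, x * y ∈ s F
  le_star : ∀ {E : Submodule D K}, E ≠ ⊥ → E ≤ s E
  idem : ∀ {E : Submodule D K}, E ≠ ⊥ → s (s E) ≤ s E

theorem SSop.mono {s : Submodule D K → Submodule D K} (h : SSop s) {E F : Submodule D K}
    (hE : E ≠ ⊥) (hEF : E ≤ F) : s E ≤ s F := by
  intro y hy
  have := h.mul_mem 1 hE (ne_bot_of_le_ne_bot hE hEF) (fun e he => by simpa using hEF he) y hy
  simpa using this

theorem IsSemistarOperation.ssop {s : Submodule D K → Submodule D K}
    (h : IsSemistarOperation s) : SSop s where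
  mul_mem := by
    intro x E F hE hF hEF y hy
    by_cases hx : x = 0
    · subst hx; simp
    have h1 : Submodule.map (LinearMap.mulLeft D x) E ≤ F := by
      rintro _ ⟨e, he, rfl⟩; exact hEF e he
    have h2 : Submodule.map (LinearMap.mulLeft D x) E ≠ ⊥ := by
      intro h0
      obtain ⟨e, he, he0⟩ := (Submodule.ne_bot_iff _).1 hE
      have : x * e ∈ Submodule.map (LinearMap.mulLeft D x) E := ⟨e, he, rfl⟩
      rw [h0, Submodule.mem_bot] at this
      exact (mul_ne_zero hx he0) this
    have h3 := h.mono h2 hF h1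
    rw [h.map_smul x hx hE] at h3
    exact h3 ⟨y, hy, rfl⟩
  le_star := h.le_star
  idem := fun hE => (h.star_star hE).le

theorem finTypeOp_eq (s : Submodule D K → Submodule D K) (E : Submodule D K) :
    finTypeOp s E = ⨆ i : {F : Submodule D K // F ≠ ⊥ ∧ F.FG ∧ F ≤ E}, s i.1 := by
  unfold finTypeOp
  apply le_antisymm
  · exact iSup_le fun F => iSup_le fun h1 => iSup_le fun h2 => iSup_le fun h3 =>
      le_iSup (fun i : {F : Submodule D K // F ≠ ⊥ ∧ F.FG ∧ F ≤ E} => s i.1) ⟨F, h1, h2, h3⟩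
  · refine iSup_le fun ⟨F, h1, h2, h3⟩ => ?_
    exact le_iSup_of_le F (le_iSup_of_le h1 (le_iSup_of_le h2 (le_iSup_of_le h3 le_rfl)))

theorem exists_fg_sub {E : Submodule D K} {x : K} (hx : x ∈ E) (hE : E ≠ ⊥) :
    ∃ F : Submodule D K, F ≠ ⊥ ∧ F.FG ∧ F ≤ E ∧ x ∈ F := by
  obtain ⟨e, he, he0⟩ := (Submodule.ne_bot_iff _).1 hE
  refine ⟨Submodule.span D {x, e}, ?_, Submodule.fg_span (by simp), ?_, ?_⟩
  · refine (Submodule.ne_bot_iff _).2 ⟨e, Submodule.subset_span (by simp), he0⟩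
  · rw [Submodule.span_le]; rintro y (rfl | rfl) <;> assumption
  · exact Submodule.subset_span (by simp)

theorem fin_directed {s : Submodule D K → Submodule D K} (h : SSop s) (E : Submodule D K) :
    Directed (· ≤ ·) (fun i : {F : Submodule D K // F ≠ ⊥ ∧ F.FG ∧ F ≤ E} => s i.1) := by
  rintro ⟨F, h1, h2, h3⟩ ⟨G, g1, g2, g3⟩
  refine ⟨⟨F ⊔ G, ne_bot_of_le_ne_bot h1 le_sup_left, h2.sup g2, sup_le h3 g3⟩, ?_, ?_⟩
  · exact h.mono h1 le_sup_left
  · exact h.mono g1 le_sup_right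

theorem fin_nonempty {E : Submodule D K} (hE : E ≠ ⊥) :
    Nonempty {F : Submodule D K // F ≠ ⊥ ∧ F.FG ∧ F ≤ E} := by
  obtain ⟨F, h1, h2, h3, _⟩ := exists_fg_sub (zero_mem E) hE
  exact ⟨⟨F, h1, h2, h3⟩⟩

theorem mem_fin {s : Submodule D K → Submodule D K} (h : SSop s) {E : Submodule D K}
    (hE : E ≠ ⊥) {x : K} :
    x ∈ finTypeOp s E ↔ ∃ F : Submodule D K, F ≠ ⊥ ∧ F.FG ∧ F ≤ E ∧ x ∈ s F := by
  have := fin_nonempty hE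
  rw [finTypeOp_eq, Submodule.mem_iSup_of_directed _ (fin_directed h E)]
  constructor
  · rintro ⟨⟨F, h1, h2, h3⟩, hx⟩; exact ⟨F, h1, h2, h3, hx⟩
  · rintro ⟨F, h1, h2, h3, hx⟩; exact ⟨⟨F, h1, h2, h3⟩, hx⟩

theorem fin_le {s : Submodule D K → Submodule D K} (h : SSop s) {E : Submodule D K}
    (hE : E ≠ ⊥) : finTypeOp s E ≤ s E := by
  intro x hx
  obtain ⟨F, h1, h2, h3, hx⟩ := (mem_fin h hE).1 hx
  exact h.mono h1 h3 hx

theorem fin_ssop {s : Submodule D K → Submodule D K} (h : SSop s) : SSop (finTypeOp s) where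
  mul_mem := by
    intro x E F hE hF hEF y hy
    by_cases hx : x = 0
    · subst hx; simp
    obtain ⟨G, h1, h2, h3, hy⟩ := (mem_fin h hE).1 hy
    refine (mem_fin h hF).2 ⟨G.map (LinearMap.mulLeft D x), ?_, h2.map _, ?_, ?_⟩
    · obtain ⟨e, he, he0⟩ := (Submodule.ne_bot_iff _).1 h1
      exact (Submodule.ne_bot_iff _).2 ⟨x * e, ⟨e, he, rfl⟩, mul_ne_zero hx he0⟩
    · rintro _ ⟨e, he, rfl⟩; exact hEF e (h3 he)
    · refine h.mul_mem x h1 ?_ ?_ y hy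
      · obtain ⟨e, he, he0⟩ := (Submodule.ne_bot_iff _).1 h1
        exact (Submodule.ne_bot_iff _).2 ⟨x * e, ⟨e, he, rfl⟩, mul_ne_zero hx he0⟩
      · intro e he; exact ⟨e, he, rfl⟩
  le_star := by
    intro E hE x hx
    obtain ⟨F, h1, h2, h3, h4⟩ := exists_fg_sub hx hE
    exact (mem_fin h hE).2 ⟨F, h1, h2, h3, h.le_star h1 h4⟩
  idem := by
    intro E hE x hx
    have hE' : finTypeOp s E ≠ ⊥ := by
      obtain ⟨e, he, he0⟩ := (Submodule.ne_bot_iff _).1 hE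
      obtain ⟨F, h1, h2, h3, h4⟩ := exists_fg_sub he hE
      exact (Submodule.ne_bot_iff _).2
        ⟨e, (mem_fin h hE).2 ⟨F, h1, h2, h3, h.le_star h1 h4⟩, he0⟩
    obtain ⟨F, h1, h2, h3, h4⟩ := (mem_fin h hE').1 hx
    have := fin_nonempty hE
    rw [finTypeOp_eq] at h3
    obtain ⟨⟨G, g1, g2, g3⟩, hi⟩ := fg_le_of_directed _ (fin_directed h E) h2 h3
    exact (mem_fin h hE).2 ⟨G, g1, g2, g3, h.idem g1 (h.mono h1 hi h4)⟩

theorem mem_idealExt {I : Ideal D} {x : D} : algebraMap D K x ∈ idealExt K I ↔ x ∈ I := by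
  constructor
  · rintro ⟨y, hy, hyx⟩
    have : y = x := IsFractionRing.injective D K hyx
    exact this ▸ hy
  · intro h; exact ⟨x, h, rfl⟩

theorem idealExt_ne_bot {I : Ideal D} (h : I ≠ ⊥) : idealExt K I ≠ ⊥ := by
  obtain ⟨e, he, he0⟩ := (Submodule.ne_bot_iff _).1 h
  exact (Submodule.ne_bot_iff _).2 ⟨algebraMap D K e, mem_idealExt.2 he,
    fun h0 => he0 (IsFractionRing.injective D K (by simpa using h0))⟩

theorem idealExt_mono {I J : Ideal D} (h : I ≤ J) : idealExt K I ≤ idealExt K J :=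
  Submodule.map_mono h

/-- quasi-closure -/
def qcl (s : Submodule D K → Submodule D K) (I : Ideal D) : Ideal D :=
  Submodule.comap (Algebra.linearMap D K) (s (idealExt K I))

theorem mem_qcl {s : Submodule D K → Submodule D K} {I : Ideal D} {x : D} :
    x ∈ qcl s I ↔ algebraMap D K x ∈ s (idealExt K I) := Iff.rfl

theorem le_qcl {s : Submodule D K → Submodule D K} (h : SSop s) {I : Ideal D} (hI : I ≠ ⊥) :
    I ≤ qcl s I := fun _ hx => h.le_star (idealExt_ne_bot hI) (mem_idealExt.2 hx)

theorem idealExt_qcl_le (s : Submodule D K → Submodule D K) (I : Ideal D) :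
    idealExt K (qcl s I) ≤ s (idealExt K I) := by
  rintro _ ⟨y, hy, rfl⟩; exact hy

theorem qcl_ne_bot {s : Submodule D K → Submodule D K} (h : SSop s) {I : Ideal D} (hI : I ≠ ⊥) :
    qcl s I ≠ ⊥ := ne_bot_of_le_ne_bot hI (le_qcl h hI)

theorem star_qcl_le {s : Submodule D K → Submodule D K} (h : SSop s) {I : Ideal D} (hI : I ≠ ⊥) :
    s (idealExt K (qcl s I)) ≤ s (idealExt K I) :=
  (h.mono (idealExt_ne_bot (qcl_ne_bot h hI)) (idealExt_qcl_le s I)).trans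
    (h.idem (idealExt_ne_bot hI))

theorem quasi_qcl {s : Submodule D K → Submodule D K} (h : SSop s) {I : Ideal D} (hI : I ≠ ⊥) :
    QuasiStarIdeal s (qcl s I) := by
  refine ⟨qcl_ne_bot h hI, le_antisymm ?_ (le_qcl h (qcl_ne_bot h hI))⟩
  intro x hx
  exact star_qcl_le h hI hx

theorem qcl_eq {s : Submodule D K → Submodule D K} {I : Ideal D} (hI : QuasiStarIdeal s I) :
    qcl s I = I := hI.2

theorem qmax_prime {s : Submodule D K → Submodule D K} (h : SSop s) {Q : Ideal D}
    (hQ : QuasiStarMaximal s Q) : Q.IsPrime := by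
  obtain ⟨hq, hne, hmax⟩ := hQ
  refine Ideal.isPrime_iff.2 ⟨hne, ?_⟩
  intro a b hab
  by_contra! hcon
  obtain ⟨ha, hb⟩ := hcon
  set J : Ideal D := Q ⊔ Ideal.span {a} with hJ
  have hQJ : Q ≤ J := le_sup_left
  have haJ : a ∈ J := Ideal.mem_sup_right (Ideal.subset_span rfl)
  have hJ0 : J ≠ ⊥ := ne_bot_of_le_ne_bot hq.1 hQJ
  have h1 : qcl s J = ⊤ := by
    by_contra hc
    have := hmax _ (quasi_qcl h hJ0) hc (hQJ.trans (le_qcl h hJ0))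
    exact ha (this ▸ le_qcl h hJ0 haJ)
  have h2 : (1 : D) ∈ qcl s J := h1 ▸ Submodule.mem_top
  apply hb
  rw [← qcl_eq hq, mem_qcl]
  have := h.mul_mem (algebraMap D K b) (idealExt_ne_bot hJ0) (idealExt_ne_bot hq.1) ?_ _
    (mem_qcl.1 h2)
  · simpa using this
  · rintro _ ⟨e, he, rfl⟩
    rw [Algebra.linearMap_apply, ← map_mul, mem_idealExt]
    obtain ⟨q, hq', t, ht, rfl⟩ := Submodule.mem_sup.1 he
    obtain ⟨r, rfl⟩ := Ideal.mem_span_singleton.1 ht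
    rw [mul_add]
    exact Q.add_mem (Q.mul_mem_left _ hq') (by
      have := Q.mul_mem_right r hab
      rwa [mul_comm a b, mul_assoc] at this)

theorem exists_fg_ideal {s : Submodule D K → Submodule D K} (h : SSop s) {H : Ideal D}
    (hH : H ≠ ⊥) {x : K} (h1 : x ∈ finTypeOp s (idealExt K H)) :
    ∃ F : Ideal D, F ≠ ⊥ ∧ F.FG ∧ F ≤ H ∧ x ∈ s (idealExt K F) := by
  obtain ⟨F, f1, f2, f3, f4⟩ := (mem_fin h (idealExt_ne_bot hH)).1 h1
  have hFe : idealExt K (F.comap (Algebra.linearMap D K)) = F := by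
    apply le_antisymm
    · rintro _ ⟨y, hy, rfl⟩; exact hy
    · intro y hy
      obtain ⟨z, hz, rfl⟩ := f3 hy
      exact ⟨z, hy, rfl⟩
  refine ⟨F.comap (Algebra.linearMap D K), ?_, ?_, ?_, ?_⟩
  · intro h0
    rw [h0] at hFe
    exact f1 (by rw [← hFe]; simp [idealExt])
  · refine Submodule.fg_of_fg_map_injective (Algebra.linearMap D K)
      (IsFractionRing.injective D K) ?_
    change (idealExt K _).FG
    rwa [hFe]
  · intro y hy; exact mem_idealExt.1 (f3 hy)
  · rwa [hFe]

theorem one_mem_of_not_le {s : Submodule D K → Submodule D K} (h : SSop s) {H : Ideal D}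
    (hH : H ≠ ⊥) (hQ : ∀ Q, QuasiStarMaximal (finTypeOp s) Q → ¬ H ≤ Q) :
    (1 : K) ∈ finTypeOp s (idealExt K H) := by
  by_contra hcon
  have hf := fin_ssop h
  obtain ⟨M, hHM, hM⟩ := zorn_le_nonempty₀
    {J : Ideal D | H ≤ J ∧ (1 : K) ∉ finTypeOp s (idealExt K J)} (by
      intro c hc hch y hy
      refine ⟨sSup c, ⟨(hc hy).1.trans (le_sSup hy), ?_⟩, fun z hz => le_sSup hz⟩
      intro h1
      have hU : sSup c ≠ ⊥ := ne_bot_of_le_ne_bot hH ((hc hy).1.trans (le_sSup hy))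
      obtain ⟨F, f1, f2, f3, f4⟩ := exists_fg_ideal h hU h1
      have : Nonempty c := ⟨⟨y, hy⟩⟩
      rw [sSup_eq_iSup'] at f3
      obtain ⟨⟨J, hJ⟩, hi⟩ := fg_le_of_directed (fun i : c => (i : Ideal D))
        (hch.directedOn.directed_val) f2 f3
      apply (hc hJ).2
      have hJ0 : J ≠ ⊥ := ne_bot_of_le_ne_bot hH (hc hJ).1
      exact (mem_fin h (idealExt_ne_bot hJ0)).2
        ⟨idealExt K F, idealExt_ne_bot f1, Submodule.FG.map _ f2, idealExt_mono hi, f4⟩) H ⟨le_rfl, hcon⟩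
  have hM0 : M ≠ ⊥ := ne_bot_of_le_ne_bot hH hHM
  refine hQ M ⟨⟨hM0, ?_⟩, ?_, ?_⟩ hHM
  · refine le_antisymm (hM.2 ⟨hHM.trans (le_qcl hf hM0), fun h1 => ?_⟩ (le_qcl hf hM0))
      (le_qcl hf hM0)
    exact hM.1.2 (star_qcl_le hf hM0 h1)
  · rintro rfl
    refine hM.1.2 (hf.le_star (idealExt_ne_bot hM0) ?_)
    have := mem_idealExt (K := K) (I := (⊤ : Ideal D)) (x := 1)
    simpa using this
  · intro J hJ hJt hMJ
    refine le_antisymm (hM.2 ⟨hHM.trans hMJ, fun h1 => hJt ?_⟩ hMJ) hMJ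
    rw [Ideal.eq_top_iff_one, ← qcl_eq hJ, mem_qcl]
    simpa using h1

theorem mem_extend {Q : Ideal D} (hQ : Q.IsPrime) {E : Submodule D K} {x : K} :
    x ∈ extendToPrime Q E ↔ ∃ s : D, s ∉ Q ∧ algebraMap D K s * x ∈ E := by
  constructor
  · intro hx
    refine Submodule.span_induction (fun y hy => hy) ?_ ?_ ?_ hx
    · exact ⟨1, fun h => hQ.ne_top ((Ideal.eq_top_iff_one _).2 h), by simp⟩
    · rintro y z _ _ ⟨s, hs, hy⟩ ⟨t, ht, hz⟩
      refine ⟨s * t, fun h => (hQ.mem_or_mem h).elim hs ht, ?_⟩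
      have h1 := E.smul_mem t hy
      have h2 := E.smul_mem s hz
      rw [Algebra.smul_def] at h1 h2
      have := E.add_mem h1 h2
      convert this using 1
      rw [map_mul]; ring
    · rintro r y _ ⟨s, hs, hy⟩
      refine ⟨s, hs, ?_⟩
      have h1 := E.smul_mem r hy
      rw [Algebra.smul_def] at h1
      convert h1 using 1
      rw [Algebra.smul_def]; ring
  · intro hx; exact Submodule.subset_span hx

theorem mem_stable {s : Submodule D K → Submodule D K} (h : SSop s) {E : Submodule D K} {x : K} :
    x ∈ stableOp s E ↔ ∀ Q, QuasiStarMaximal (finTypeOp s) Q →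
      ∃ t : D, t ∉ Q ∧ algebraMap D K t * x ∈ E := by
  simp only [stableOp, Submodule.mem_iInf]
  exact forall₂_congr fun Q hQ => mem_extend (qmax_prime (fin_ssop h) hQ)

theorem stable_mono {s : Submodule D K → Submodule D K} (h : SSop s) {E F : Submodule D K}
    (hEF : E ≤ F) : stableOp s E ≤ stableOp s F := by
  intro x hx
  rw [mem_stable h] at hx ⊢
  intro Q hQ
  obtain ⟨t, ht, htx⟩ := hx Q hQ
  exact ⟨t, ht, hEF htx⟩

theorem not_mem_mul {s : Submodule D K → Submodule D K} (h : SSop s) {Q : Ideal D}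
    (hQ : QuasiStarMaximal (finTypeOp s) Q) {a b : D} (ha : a ∉ Q) (hb : b ∉ Q) : a * b ∉ Q :=
  fun hab => ((qmax_prime (fin_ssop h) hQ).mem_or_mem hab).elim ha hb

theorem one_not_mem {s : Submodule D K → Submodule D K} (h : SSop s) {Q : Ideal D}
    (hQ : QuasiStarMaximal (finTypeOp s) Q) : (1 : D) ∉ Q :=
  fun h1 => hQ.2.1 ((Ideal.eq_top_iff_one _).2 h1)

theorem le_stable {s : Submodule D K → Submodule D K} (h : SSop s) (E : Submodule D K) :
    E ≤ stableOp s E := by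
  intro x hx
  rw [mem_stable h]
  exact fun Q hQ => ⟨1, one_not_mem h hQ, by simpa using hx⟩

theorem stable_le_iff {s : Submodule D K → Submodule D K} (h : SSop s) {E F : Submodule D K} :
    stableOp s E ≤ stableOp s F ↔ E ≤ stableOp s F := by
  refine ⟨(le_stable h E).trans, fun hEF x hx => ?_⟩
  rw [mem_stable h] at hx ⊢
  intro Q hQ
  obtain ⟨t, ht, htx⟩ := hx Q hQ
  obtain ⟨u, hu, hux⟩ := (mem_stable h).1 (hEF htx) Q hQ
  exact ⟨u * t, not_mem_mul h hQ hu ht, by rwa [map_mul, mul_assoc]⟩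

theorem stable_mul {s : Submodule D K → Submodule D K} (h : SSop s) (F G : Submodule D K) :
    stableOp s (stableOp s F * stableOp s G) = stableOp s (F * G) := by
  apply le_antisymm
  · rw [stable_le_iff h, Submodule.mul_le]
    intro x hx y hy
    rw [mem_stable h] at hx hy ⊢
    intro Q hQ
    obtain ⟨t, ht, htx⟩ := hx Q hQ
    obtain ⟨u, hu, hux⟩ := hy Q hQ
    refine ⟨t * u, not_mem_mul h hQ ht hu, ?_⟩
    convert Submodule.mul_mem_mul htx hux using 1
    rw [map_mul]; ring
  · exact stable_mono h (mul_le_mul' (le_stable h F) (le_stable h G))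

theorem qinv_iff {s : Submodule D K → Submodule D K} (h : SSop s) (E : Submodule D K) :
    QuasiStarInvertible (stableOp s) E ↔ ∀ Q, QuasiStarMaximal (finTypeOp s) Q →
      ∃ t : D, t ∉ Q ∧ algebraMap D K t ∈ E * (stableOp s 1 / E) := by
  constructor
  · intro hE Q hQ
    have h1 : (1 : K) ∈ stableOp s (E * (stableOp s 1 / E)) := by
      rw [hE]; exact le_stable h _ (Submodule.one_le.1 le_rfl)
    simpa using (mem_stable h).1 h1 Q hQ
  · intro hE
    apply le_antisymm
    · rw [stable_le_iff h, Submodule.mul_le]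
      intro x hx y hy
      rw [mul_comm]
      exact Submodule.mem_div_iff_forall_mul_mem.1 hy x hx
    · rw [stable_le_iff h, Submodule.one_le, mem_stable h]
      simpa using hE

theorem stable_le_fin {s : Submodule D K → Submodule D K} (h : SSop s) {E : Submodule D K}
    (hE : E ≠ ⊥) : stableOp s E ≤ finTypeOp s E := by
  intro x hx
  rw [mem_stable h] at hx
  let H : Ideal D := E.comap (LinearMap.toSpanSingleton D K x)
  have hmem : ∀ t : D, t ∈ H ↔ algebraMap D K t * x ∈ E := by
    intro t
    simp [H, Algebra.smul_def]
  have hH : H ≠ ⊥ := by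
    obtain ⟨e, he, he0⟩ := (Submodule.ne_bot_iff _).1 hE
    obtain ⟨a, b, hb, hab⟩ := IsFractionRing.div_surjective (A := D) (x / e)
    have hb0 : algebraMap D K b ≠ 0 := IsFractionRing.to_map_ne_zero_of_mem_nonZeroDivisors hb
    refine (Submodule.ne_bot_iff _).2 ⟨b, (hmem b).2 ?_, nonZeroDivisors.ne_zero hb⟩
    have : algebraMap D K b * x = a • e := by
      rw [Algebra.smul_def]
      field_simp at hab
      linear_combination -hab
    rw [this]
    exact E.smul_mem _ he
  have h1 := one_mem_of_not_le h hH (fun Q hQ hle => by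
    obtain ⟨t, ht, htx⟩ := hx Q hQ
    exact ht (hle ((hmem t).2 htx)))
  have := (fin_ssop h).mul_mem x (idealExt_ne_bot hH) hE ?_ 1 h1
  · simpa using this
  · rintro _ ⟨e, he, rfl⟩
    rw [Algebra.linearMap_apply, mul_comm]
    exact (hmem e).1 he


theorem pmd_local {s : Submodule D K → Submodule D K} (h : SSop s) (hP : StarPMD s) {Q : Ideal D}
    (hQ : QuasiStarMaximal (finTypeOp s) Q) (a b : D) :
    ∃ t r : D, t ∉ Q ∧ (t * a = r * b ∨ t * b = r * a) := by
  have hpr := qmax_prime (fin_ssop h) hQ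
  obtain ⟨hd, hv⟩ := hP Q hQ
  have hinj : Function.Injective (algebraMap D (Localization.AtPrime Q)) :=
    IsLocalization.injective _ Q.primeCompl_le_nonZeroDivisors
  obtain ⟨c, hc⟩ := hv.cond' (algebraMap D (Localization.AtPrime Q) a) (algebraMap D _ b)
  obtain ⟨⟨r, t⟩, hrt⟩ := IsLocalization.surj Q.primeCompl c
  refine ⟨t, r, t.2, ?_⟩
  rcases hc with hc | hc
  · right
    apply hinj
    rw [map_mul, map_mul, ← hrt, ← hc]; ring
  · left
    apply hinj
    rw [map_mul, map_mul, ← hrt, ← hc]; ring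

theorem pmd_of_local {s : Submodule D K → Submodule D K} (h : SSop s)
    (hP : ∀ Q : Ideal D, QuasiStarMaximal (finTypeOp s) Q → ∀ a b : D,
      ∃ t r : D, t ∉ Q ∧ (t * a = r * b ∨ t * b = r * a)) : StarPMD s := by
  intro Q hpr hQ
  have hd : IsDomain (Localization.AtPrime Q) :=
    IsLocalization.isDomain_localization Q.primeCompl_le_nonZeroDivisors
  refine ⟨hd, @ValuationRing.mk _ _ hd ⟨?_⟩⟩
  have key : ∀ (x y : Localization.AtPrime Q) (a b t r : D) (u v : Q.primeCompl), t ∉ Q →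
      x * algebraMap D _ u = algebraMap D _ a → y * algebraMap D _ v = algebraMap D _ b →
      t * a = r * b → ∃ c, y * c = x := by
    intro x y a b t r u v ht hx hy hab
    have hu := IsLocalization.map_units (Localization.AtPrime Q) u
    have htu := IsLocalization.map_units (Localization.AtPrime Q) (⟨t, ht⟩ : Q.primeCompl)
    obtain ⟨u', hu'⟩ := hu
    obtain ⟨t', ht'⟩ := htu
    refine ⟨algebraMap D _ (r * v) * ↑u'⁻¹ * ↑t'⁻¹, ?_⟩
    have e : algebraMap D (Localization.AtPrime Q) t * algebraMap D _ a
        = algebraMap D _ r * algebraMap D _ b := by rw [← map_mul, hab, map_mul]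
    rw [← hx, ← hy, ← hu', ← ht'] at e
    rw [← mul_assoc, ← mul_assoc, Units.mul_inv_eq_iff_eq_mul, Units.mul_inv_eq_iff_eq_mul, map_mul]
    change ((t' : (Localization.AtPrime Q)ˣ) : Localization.AtPrime Q) = _ at ht'
    linear_combination -e
  intro x y
  obtain ⟨⟨a, u⟩, hx⟩ := IsLocalization.surj Q.primeCompl x
  obtain ⟨⟨b, v⟩, hy⟩ := IsLocalization.surj Q.primeCompl y
  obtain ⟨t, r, ht, hab | hab⟩ := hP Q hQ a b
  · obtain ⟨c, hc⟩ := key x y a b t r u v ht hx hy hab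
    exact ⟨c, Or.inr hc⟩
  · obtain ⟨c, hc⟩ := key y x b a t r v u ht hy hx hab
    exact ⟨c, Or.inl hc⟩

theorem fg_local_principal {Q : Ideal D} (hpr : Q.IsPrime)
    (hv : ∀ a b : D, ∃ t r : D, t ∉ Q ∧ (t * a = r * b ∨ t * b = r * a))
    (J : Ideal D) (hJ : J.FG) :
    ∃ a ∈ J, ∃ t : D, t ∉ Q ∧ ∀ x ∈ J, ∃ r, t * x = r * a := by
  refine Submodule.fg_induction
    (motive := fun J _ => ∃ a ∈ J, ∃ t : D, t ∉ Q ∧ ∀ x ∈ J, ∃ r, t * x = r * a) ?_ ?_ J hJ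
  · intro a
    refine ⟨a, Submodule.mem_span_singleton_self a, 1,
      fun h => hpr.ne_top ((Ideal.eq_top_iff_one _).2 h), fun x hx => ?_⟩
    obtain ⟨r, rfl⟩ := Submodule.mem_span_singleton.1 hx
    exact ⟨r, by simp⟩
  · rintro J₁ _ J₂ _ ⟨a, ha, t, ht, hat⟩ ⟨b, hb, u, hu, hbu⟩
    obtain ⟨v, r, hv, hab | hab⟩ := hv a b
    · refine ⟨b, Submodule.mem_sup_right hb, t * u * v, ?_, ?_⟩
      · intro hm
        rcases hpr.mem_or_mem hm with hm | hm
        · exact (hpr.mem_or_mem hm).elim ht hu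
        · exact hv hm
      · intro x hx
        obtain ⟨y, hy, z, hz, rfl⟩ := Submodule.mem_sup.1 hx
        obtain ⟨p, hp⟩ := hat y hy
        obtain ⟨q, hq⟩ := hbu z hz
        exact ⟨u * p * r + t * v * q, by
          linear_combination u * v * hp + t * v * hq + u * p * hab⟩
    · refine ⟨a, Submodule.mem_sup_left ha, t * u * v, ?_, ?_⟩
      · intro hm
        rcases hpr.mem_or_mem hm with hm | hm
        · exact (hpr.mem_or_mem hm).elim ht hu
        · exact hv hm
      · intro x hx
        obtain ⟨y, hy, z, hz, rfl⟩ := Submodule.mem_sup.1 hx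
        obtain ⟨p, hp⟩ := hat y hy
        obtain ⟨q, hq⟩ := hbu z hz
        exact ⟨t * q * r + u * v * p, by
          linear_combination u * v * hp + t * v * hq + t * q * hab⟩

theorem noeth_fg {s : Submodule D K → Submodule D K} (h : SSop s) (hN : StarNoetherian s)
    {I : Ideal D} (hI : I ≠ ⊥) :
    ∃ J : Ideal D, J ≠ ⊥ ∧ J.FG ∧ J ≤ I ∧ I ≤ qcl s J := by
  have hwf : WellFoundedGT {J : Ideal D // QuasiStarIdeal s J} := by
    rw [wellFoundedGT_iff_monotone_chain_condition]
    intro c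
    obtain ⟨n, hn⟩ := hN ⟨fun n => (c n).1, fun _ _ hab => c.mono hab⟩ (fun n => (c n).2)
    exact ⟨n, fun m hm => Subtype.ext (hn m hm).symm⟩
  let S : Set {J : Ideal D // QuasiStarIdeal s J} :=
    {X | ∃ J : Ideal D, J ≠ ⊥ ∧ J.FG ∧ J ≤ I ∧ X.1 = qcl s J}
  have hS : S.Nonempty := by
    obtain ⟨e, he, he0⟩ := (Submodule.ne_bot_iff _).1 hI
    have h1 : Ideal.span {e} ≠ ⊥ := by simpa using he0
    exact ⟨⟨_, quasi_qcl h h1⟩, _, h1, Submodule.fg_span_singleton e,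
      (Ideal.span_singleton_le_iff_mem I).2 he, rfl⟩
  obtain ⟨X, ⟨J, j1, j2, j3, j4⟩, hmax⟩ := hwf.wf.has_min S hS
  refine ⟨J, j1, j2, j3, fun x hx => ?_⟩
  set J' : Ideal D := J ⊔ Ideal.span {x} with hJ'
  have hJ0 : J' ≠ ⊥ := ne_bot_of_le_ne_bot j1 le_sup_left
  have hle : J' ≤ I := sup_le j3 ((Ideal.span_singleton_le_iff_mem I).2 hx)
  have hmem : (⟨_, quasi_qcl h hJ0⟩ : {J : Ideal D // QuasiStarIdeal s J}) ∈ S :=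
    ⟨J', hJ0, Submodule.FG.sup j2 (Submodule.fg_span_singleton x), hle, rfl⟩
  have h1 := hmax _ hmem
  have h2 : X ≤ ⟨_, quasi_qcl h hJ0⟩ := by
    change X.1 ≤ qcl s J'
    rw [j4]
    intro y hy
    exact h.mono (idealExt_ne_bot j1) (idealExt_mono le_sup_left) hy
  have h3 := eq_of_le_of_not_lt h2 h1
  have h4 : qcl s J' = qcl s J := by rw [← j4, h3]
  rw [← h4]
  exact le_qcl h hJ0 (Ideal.mem_sup_right (Ideal.subset_span rfl))

theorem one_to_four {s : Submodule D K → Submodule D K} (h : SSop s) (hN : StarNoetherian s)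
    (hP : StarPMD s) (I : Ideal D) (hI : I ≠ ⊥) :
    QuasiStarInvertible (stableOp s) (idealExt K I) := by
  have hinj := IsFractionRing.injective D K
  obtain ⟨J, j1, j2, j3, j4⟩ := noeth_fg h hN hI
  have hloc : ∀ Q, QuasiStarMaximal (finTypeOp s) Q →
      ∃ a ∈ J, a ≠ 0 ∧ ∃ t : D, t ∉ Q ∧ ∀ x ∈ J, ∃ r, t * x = r * a := by
    intro Q hQ
    obtain ⟨a, ha, t, ht, hat⟩ :=
      fg_local_principal (qmax_prime (fin_ssop h) hQ) (pmd_local h hP hQ) J j2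
    refine ⟨a, ha, ?_, t, ht, hat⟩
    rintro rfl
    obtain ⟨e, he, he0⟩ := (Submodule.ne_bot_iff _).1 j1
    obtain ⟨r, hr⟩ := hat e he
    rw [mul_zero] at hr
    rcases mul_eq_zero.1 hr with h0 | h0
    · exact ht (h0 ▸ Q.zero_mem)
    · exact he0 h0
  have hIJ : idealExt K I ≤ stableOp s (idealExt K J) := by
    rintro _ ⟨x, hx, rfl⟩
    rw [mem_stable h]
    intro Q hQ
    obtain ⟨a, ha, ha0, t, ht, hat⟩ := hloc Q hQ
    obtain ⟨v, r, hv, hxa | hxa⟩ := pmd_local h hP hQ x a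
    · refine ⟨v, hv, ?_⟩
      rw [Algebra.linearMap_apply, ← map_mul, hxa, mem_idealExt]
      exact J.mul_mem_left _ ha
    · -- v * a = r * x
      by_cases hr : r ∈ Q
      · exfalso
        have hax : algebraMap D K a ≠ 0 := fun h0 => ha0 (hinj (by simpa using h0))
        have hr0 : r ≠ 0 := by
          rintro rfl
          rw [zero_mul] at hxa
          rcases mul_eq_zero.1 hxa with h0 | h0
          · exact hv (h0 ▸ Q.zero_mem)
          · exact ha0 h0
        have hspan : Ideal.span {r} ≠ ⊥ := by simpa using hr0
        have h1 := h.mul_mem (algebraMap D K t * algebraMap D K r / algebraMap D K a)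
          (idealExt_ne_bot j1) (idealExt_ne_bot (K := K) hspan) (by
            rintro _ ⟨e, he, rfl⟩
            obtain ⟨p, hp⟩ := hat e he
            have : algebraMap D K t * algebraMap D K r / algebraMap D K a *
                (Algebra.linearMap D K) e = algebraMap D K (p * r) := by
              have hp' := congrArg (algebraMap D K) hp
              simp only [map_mul] at hp'
              rw [Algebra.linearMap_apply, map_mul]
              field_simp
              linear_combination algebraMap D K r * hp'
            rw [this, mem_idealExt]
            exact Ideal.mul_mem_left _ _ (Ideal.subset_span rfl)) _ (mem_qcl.1 (j4 hx))
        have h2 : algebraMap D K t * algebraMap D K r / algebraMap D K a * algebraMap D K x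
            = algebraMap D K (t * v) := by
          have hp' := congrArg (algebraMap D K) hxa
          simp only [map_mul] at hp'
          rw [map_mul]
          field_simp
          linear_combination (-algebraMap D K t) * hp'
        rw [h2] at h1
        have h3 : algebraMap D K (t * v) ∈ finTypeOp s (idealExt K Q) :=
          (mem_fin h (idealExt_ne_bot hQ.1.1)).2 ⟨_, idealExt_ne_bot hspan,
            Submodule.FG.map _ (Submodule.fg_span_singleton r),
            idealExt_mono ((Ideal.span_singleton_le_iff_mem Q).2 hr), h1⟩
        have h4 : t * v ∈ qcl (finTypeOp s) Q := h3
        rw [qcl_eq hQ.1] at h4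
        exact not_mem_mul h hQ ht hv h4
      · refine ⟨r, hr, ?_⟩
        rw [Algebra.linearMap_apply, ← map_mul, ← hxa, mem_idealExt]
        exact J.mul_mem_left _ ha
  rw [qinv_iff h]
  intro Q hQ
  obtain ⟨a, ha, ha0, t, ht, hat⟩ := hloc Q hQ
  have hax : algebraMap D K a ≠ 0 := fun h0 => ha0 (hinj (by simpa using h0))
  refine ⟨t, ht, ?_⟩
  have : algebraMap D K t = algebraMap D K a * (algebraMap D K t / algebraMap D K a) := by
    field_simp
  rw [this]
  refine Submodule.mul_mem_mul (mem_idealExt.2 (j3 ha)) ?_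
  rw [Submodule.mem_div_iff_forall_mul_mem]
  intro y hy
  have hy' := hIJ hy
  rw [mem_stable h] at hy' ⊢
  intro P hP'
  obtain ⟨u, hu, w, hw, hwe⟩ := hy' P hP'
  obtain ⟨p, hp⟩ := hat w hw
  refine ⟨u, hu, Submodule.mem_one.2 ⟨p, ?_⟩⟩
  have hp' := congrArg (algebraMap D K) hp
  simp only [map_mul] at hp'
  rw [Algebra.linearMap_apply] at hwe
  field_simp
  linear_combination (-1) * hp' + algebraMap D K t * hwe

theorem four_to_pmd {s : Submodule D K → Submodule D K} (h : SSop s)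
    (h4 : ∀ I : Ideal D, I ≠ ⊥ → QuasiStarInvertible (stableOp s) (idealExt K I)) :
    StarPMD s := by
  have hinj := IsFractionRing.injective D K
  refine pmd_of_local h fun Q hQ a b => ?_
  have hpr := qmax_prime (fin_ssop h) hQ
  by_cases h0 : Ideal.span {a, b} = (⊥ : Ideal D)
  · rw [Ideal.span_eq_bot] at h0
    exact ⟨1, 0, one_not_mem h hQ, Or.inl (by simp [h0 a (by simp)])⟩
  obtain ⟨t, ht, htm⟩ := (qinv_iff h _).1 (h4 _ h0) Q hQ
  have hI : ∀ x ∈ Ideal.span {a, b}, ∀ z ∈ stableOp s 1 / idealExt K (Ideal.span {a, b}),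
      ∃ u r : D, u ∉ Q ∧ algebraMap D K u * (z * algebraMap D K x) = algebraMap D K r := by
    intro x hx z hz
    have := Submodule.mem_div_iff_forall_mul_mem.1 hz _ (mem_idealExt.2 hx)
    obtain ⟨u, hu, hm⟩ := (mem_stable h).1 this Q hQ
    obtain ⟨r, hr⟩ := Submodule.mem_one.1 hm
    exact ⟨u, r, hu, hr.symm⟩
  have ha : a ∈ Ideal.span {a, b} := Ideal.subset_span (by simp)
  have hb : b ∈ Ideal.span {a, b} := Ideal.subset_span (by simp)
  have key : ∃ z ∈ stableOp s 1 / idealExt K (Ideal.span {a, b}),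
      z * algebraMap D K a ∉ extendToPrime Q (idealExt K Q) ∨
      z * algebraMap D K b ∉ extendToPrime Q (idealExt K Q) := by
    by_contra! hcon
    have hle : idealExt K (Ideal.span {a, b}) * (stableOp s 1 / idealExt K (Ideal.span {a, b}))
        ≤ extendToPrime Q (idealExt K Q) := by
      rw [Submodule.mul_le]
      rintro _ ⟨x, hx, rfl⟩ z hz
      obtain ⟨p, q, rfl⟩ := Ideal.mem_span_pair.1 hx
      have h1 := (extendToPrime Q (idealExt K Q)).add_mem
        (Submodule.smul_mem _ p (hcon z hz).1) (Submodule.smul_mem _ q (hcon z hz).2)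
      convert h1 using 1
      simp only [Algebra.linearMap_apply, map_add, map_mul, Algebra.smul_def]
      ring
    obtain ⟨u, hu, hut⟩ := (mem_extend hpr).1 (hle htm)
    rw [← map_mul, mem_idealExt] at hut
    exact not_mem_mul h hQ hu ht hut
  obtain ⟨z, hz, hzab⟩ := key
  obtain ⟨u, r, hu, hur⟩ := hI a ha z hz
  obtain ⟨v, q, hv, hvq⟩ := hI b hb z hz
  have hz0 : z ≠ 0 := by
    rintro rfl
    simp at hzab
  have e : (u * q) * a = (v * r) * b := by
    apply hinj
    apply mul_left_cancel₀ hz0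
    simp only [map_mul]
    rw [← hur, ← hvq]; ring
  rcases hzab with hc | hc
  · refine ⟨v * r, u * q, not_mem_mul h hQ hv fun hr => hc ?_, Or.inr e.symm⟩
    exact (mem_extend hpr).2 ⟨u, hu, by rw [hur]; exact mem_idealExt.2 hr⟩
  · refine ⟨u * q, v * r, not_mem_mul h hQ hu fun hr => hc ?_, Or.inl e⟩
    exact (mem_extend hpr).2 ⟨v, hv, by rw [hvq]; exact mem_idealExt.2 hr⟩

theorem four_to_noeth {s : Submodule D K → Submodule D K} (h : SSop s)
    (h4 : ∀ I : Ideal D, I ≠ ⊥ → QuasiStarInvertible (stableOp s) (idealExt K I)) :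
    StarNoetherian s := by
  intro c hc
  set I : Ideal D := ⨆ n, c n with hI
  have hcI : ∀ n, c n ≤ I := fun n => le_iSup c n
  have hI0 : I ≠ ⊥ := ne_bot_of_le_ne_bot (hc 0).1 (hcI 0)
  set Z := stableOp s 1 / idealExt K I with hZ
  have h1 := (qinv_iff h _).1 (h4 I hI0)
  let H : Ideal D := (idealExt K I * Z).comap (Algebra.linearMap D K)
  have hle1 : idealExt K I ≤ idealExt K I * Z := by
    intro x hx
    rw [← mul_one x]
    refine Submodule.mul_mem_mul hx ?_
    rw [hZ, Submodule.mem_div_iff_forall_mul_mem]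
    rintro _ ⟨y, hy, rfl⟩
    exact le_stable h _ (Submodule.mem_one.2 ⟨y, by simp⟩)
  have hH0 : H ≠ ⊥ := ne_bot_of_le_ne_bot hI0 (fun x hx => hle1 (mem_idealExt.2 hx))
  have h2 := one_mem_of_not_le h hH0 (fun Q hQ hle => by
    obtain ⟨t, ht, htm⟩ := h1 Q hQ
    exact ht (hle htm))
  obtain ⟨F, f1, f2, f3, f4⟩ := exists_fg_ideal h hH0 h2
  have h3 : idealExt K F ≤ ⨆ n, idealExt K (c n) * Z := by
    have e : idealExt K I * Z = ⨆ n, idealExt K (c n) * Z := by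
      rw [hI, idealExt, Submodule.map_iSup, Submodule.iSup_mul]; rfl
    rw [← e]
    rintro _ ⟨x, hx, rfl⟩
    exact f3 hx
  obtain ⟨n, hn⟩ := fg_le_of_directed (fun n => idealExt K (c n) * Z)
    (Monotone.directed_le fun a b hab => mul_le_mul' (idealExt_mono (c.mono hab)) le_rfl)
    (Submodule.FG.map _ f2) h3
  refine ⟨n, fun m hm => le_antisymm ?_ (c.mono hm)⟩
  intro x hx
  have hcn := (hc n).1
  rw [← qcl_eq (hc n), mem_qcl]
  have h5 := h.mul_mem (algebraMap D K x) (idealExt_ne_bot f1) (F := s (idealExt K (c n)))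
    (ne_bot_of_le_ne_bot (idealExt_ne_bot hcn) (h.le_star (idealExt_ne_bot hcn))) (by
      intro e he
      refine fin_le h (idealExt_ne_bot hcn) (stable_le_fin h (idealExt_ne_bot hcn) ?_)
      have h6 : stableOp s (idealExt K (c n)) = stableOp s (stableOp s (idealExt K (c n)) * stableOp s 1) := by
        rw [stable_mul h, mul_one]
      have h7 : idealExt K (c n) * Z ≤
          (stableOp s (idealExt K (c n))).comap (LinearMap.mulLeft D (algebraMap D K x)) := by
        rw [Submodule.mul_le]
        intro y hy z hz
        rw [h6]
        refine le_stable h _ ?_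
        have : LinearMap.mulLeft D (algebraMap D K x) (y * z) = y * (z * algebraMap D K x) := by
          rw [LinearMap.mulLeft_apply]; ring
        rw [this]
        exact Submodule.mul_mem_mul (le_stable h _ hy)
          (Submodule.mem_div_iff_forall_mul_mem.1 hz _ (mem_idealExt.2 (hcI m hx)))
      exact h7 (hn he)) 1 f4
  rw [mul_one] at h5
  exact h.idem (idealExt_ne_bot hcn) h5

theorem four_to_three {s : Submodule D K → Submodule D K} (h : SSop s)
    (h4 : ∀ I : Ideal D, I ≠ ⊥ → QuasiStarInvertible (stableOp s) (idealExt K I))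
    (E : Submodule D K) (hE : E ≠ ⊥) (hf : IsFractional (nonZeroDivisors D) E) :
    QuasiStarInvertible (stableOp s) E := by
  obtain ⟨d, hd, hdE⟩ := hf
  have hd0 : algebraMap D K d ≠ 0 := IsFractionRing.to_map_ne_zero_of_mem_nonZeroDivisors hd
  let I : Ideal D := (E.map (LinearMap.mulLeft D (algebraMap D K d))).comap (Algebra.linearMap D K)
  have hmem : ∀ e ∈ E, algebraMap D K d * e ∈ idealExt K I := by
    intro e he
    obtain ⟨r, hr⟩ := hdE e he
    rw [Algebra.smul_def] at hr
    rw [← hr, mem_idealExt]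
    exact ⟨e, he, hr.symm⟩
  have hI0 : I ≠ ⊥ := by
    intro h0
    obtain ⟨e, he, he0⟩ := (Submodule.ne_bot_iff _).1 hE
    have := hmem e he
    rw [h0] at this
    simp [idealExt, he0] at this
    exact hd0 (by simp [this])
  rw [qinv_iff h]
  intro Q hQ
  obtain ⟨t, ht, htm⟩ := (qinv_iff h _).1 (h4 I hI0) Q hQ
  refine ⟨t, ht, ?_⟩
  suffices hle : idealExt K I * (stableOp s 1 / idealExt K I) ≤ E * (stableOp s 1 / E) from hle htm
  rw [Submodule.mul_le]
  rintro _ ⟨x, ⟨e, he, hex⟩, rfl⟩ z hz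
  rw [← hex, LinearMap.mulLeft_apply]
  have : algebraMap D K d * e * z = e * (z * algebraMap D K d) := by ring
  rw [this]
  refine Submodule.mul_mem_mul he (Submodule.mem_div_iff_forall_mul_mem.2 fun y hy => ?_)
  rw [mul_assoc]
  exact Submodule.mem_div_iff_forall_mul_mem.1 hz _ (hmem y hy)

theorem three_to_four {s : Submodule D K → Submodule D K}
    (h3 : ∀ E : Submodule D K, E ≠ ⊥ → IsFractional (nonZeroDivisors D) E →
        QuasiStarInvertible (stableOp s) E) (I : Ideal D) (hI : I ≠ ⊥) :
    QuasiStarInvertible (stableOp s) (idealExt K I) := by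
  refine h3 _ (idealExt_ne_bot hI) ⟨1, one_mem _, ?_⟩
  rintro _ ⟨x, _, rfl⟩
  exact ⟨x, by simp⟩

theorem three_to_two {s : Submodule D K → Submodule D K} (h : SSop s) (F : Submodule D K)
    (hF : F ≠ ⊥) (hfr : IsFractional (nonZeroDivisors D) F)
    (hinv : QuasiStarInvertible (stableOp s) F) :
    ∃ G : Submodule D K, G ≠ ⊥ ∧ IsFractional (nonZeroDivisors D) G ∧
      stableOp s (F * G) = stableOp s (1 : Submodule D K) := by
  obtain ⟨d, hd, hdF⟩ := hfr
  have hd0 : algebraMap D K d ≠ 0 := IsFractionRing.to_map_ne_zero_of_mem_nonZeroDivisors hd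
  obtain ⟨f, hf, hf0⟩ := (Submodule.ne_bot_iff _).1 hF
  obtain ⟨r, hr⟩ := hdF f hf
  rw [Algebra.smul_def] at hr
  have hr0 : r ≠ 0 := by
    rintro rfl
    rw [map_zero] at hr
    exact mul_ne_zero hd0 hf0 hr.symm
  let G : Submodule D K := (stableOp s 1 / F) ⊓
    (1 : Submodule D K).comap (LinearMap.mulLeft D f)
  have hdiv : algebraMap D K d ∈ stableOp s 1 / F := by
    rw [Submodule.mem_div_iff_forall_mul_mem]
    intro y hy
    obtain ⟨p, hp⟩ := hdF y hy
    rw [Algebra.smul_def] at hp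
    exact le_stable h _ (Submodule.mem_one.2 ⟨p, hp⟩)
  refine ⟨G, ?_, ?_, ?_⟩
  · refine (Submodule.ne_bot_iff _).2 ⟨algebraMap D K d, ⟨hdiv, ?_⟩, hd0⟩
    exact Submodule.mem_one.2 ⟨r, by rw [hr, LinearMap.mulLeft_apply, mul_comm]⟩
  · refine ⟨r, mem_nonZeroDivisors_of_ne_zero hr0, ?_⟩
    rintro g ⟨_, hg⟩
    obtain ⟨p, hp⟩ := Submodule.mem_one.1 hg
    refine ⟨d * p, ?_⟩
    rw [Algebra.smul_def, hr, map_mul, hp, LinearMap.mulLeft_apply, mul_assoc]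
  · refine Eq.trans ?_ hinv
    have hG : stableOp s G = stableOp s (stableOp s 1 / F) := by
      refine le_antisymm (stable_mono h inf_le_left) ?_
      rw [stable_le_iff h]
      intro z hz
      rw [mem_stable h]
      intro Q hQ
      obtain ⟨t, ht, htm⟩ := (mem_stable h).1
        (Submodule.mem_div_iff_forall_mul_mem.1 hz f hf) Q hQ
      refine ⟨t, ht, ?_, ?_⟩
      · have := (stableOp s 1 / F).smul_mem t hz
        rwa [Algebra.smul_def] at this
      · change f * (algebraMap D K t * z) ∈ (1 : Submodule D K)
        convert htm using 1
        ring
    rw [← stable_mul h, hG, stable_mul h]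

theorem two_to_three {s : Submodule D K → Submodule D K} (h : SSop s) (F G : Submodule D K)
    (hG : stableOp s (F * G) = stableOp s (1 : Submodule D K)) :
    QuasiStarInvertible (stableOp s) F := by
  apply le_antisymm
  · rw [stable_le_iff h, Submodule.mul_le]
    intro x hx y hy
    rw [mul_comm]
    exact Submodule.mem_div_iff_forall_mul_mem.1 hy x hx
  · rw [← hG, hG]
    calc stableOp s 1 = stableOp s (F * G) := hG.symm
      _ ≤ _ := stable_mono h (mul_le_mul' le_rfl ?_)
    intro g hg
    rw [Submodule.mem_div_iff_forall_mul_mem]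
    intro y hy
    rw [← hG, mul_comm g y]
    exact le_stable h _ (Submodule.mul_mem_mul hy hg)

end Helpers

section Statement

variable {D : Type*} [CommRing D] [IsDomain D]
variable {K : Type*} [Field K] [Algebra D K] [IsFractionRing D K]

/-- `D` an integral domain, `⋆` a semistar operation. TFAE:
(1) `D` is ⋆-Noetherian and a P⋆MD (a ⋆-Dedekind domain);
(2) `{ F^⋆̃ : F nonzero fractional ideal }` is a group under `F^⋆̃ × G^⋆̃ := (FG)^⋆̃`
    (with identity `D^⋆̃`);
(3) every nonzero fractional ideal of `D` is quasi-⋆̃-invertible;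
(4) every nonzero integral ideal of `D` is quasi-⋆̃-invertible. -/
theorem starDedekind_iff_group_iff_quasiInvertible
    (star : Submodule D K → Submodule D K) (hstar : IsSemistarOperation star) :
    ((StarNoetherian star ∧ StarPMD star) ↔
      ((∀ F G : Submodule D K, F ≠ ⊥ → G ≠ ⊥ →
          IsFractional (nonZeroDivisors D) F → IsFractional (nonZeroDivisors D) G →
          stableOp star (stableOp star F * stableOp star G) = stableOp star (F * G)) ∧
       (∀ F : Submodule D K, F ≠ ⊥ → IsFractional (nonZeroDivisors D) F →
          stableOp star (F * (1 : Submodule D K)) = stableOp star F) ∧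
       (∀ F : Submodule D K, F ≠ ⊥ → IsFractional (nonZeroDivisors D) F →
          ∃ G : Submodule D K, G ≠ ⊥ ∧ IsFractional (nonZeroDivisors D) G ∧
            stableOp star (F * G) = stableOp star (1 : Submodule D K)))) ∧
    ((StarNoetherian star ∧ StarPMD star) ↔
      ∀ E : Submodule D K, E ≠ ⊥ → IsFractional (nonZeroDivisors D) E →
        QuasiStarInvertible (stableOp star) E) ∧
    ((StarNoetherian star ∧ StarPMD star) ↔
      ∀ I : Ideal D, I ≠ ⊥ → QuasiStarInvertible (stableOp star) (idealExt K I)) := by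
  have h := hstar.ssop
  have h14 : (StarNoetherian star ∧ StarPMD star) ↔
      ∀ I : Ideal D, I ≠ ⊥ → QuasiStarInvertible (stableOp star) (idealExt K I) :=
    ⟨fun h1 => one_to_four h h1.1 h1.2, fun h4 => ⟨four_to_noeth h h4, four_to_pmd h h4⟩⟩
  have h13 : (StarNoetherian star ∧ StarPMD star) ↔
      ∀ E : Submodule D K, E ≠ ⊥ → IsFractional (nonZeroDivisors D) E →
        QuasiStarInvertible (stableOp star) E :=
    h14.trans ⟨four_to_three h, three_to_four⟩
  refine ⟨h13.trans ⟨fun h3 => ⟨fun F G _ _ _ _ => stable_mul h F G,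
    fun F _ _ => by rw [mul_one], fun F hF hf => three_to_two h F hF hf (h3 F hF hf)⟩, ?_⟩,
    h13, h14⟩
  rintro ⟨-, -, h2⟩ E hE hf
  obtain ⟨G, -, -, hG⟩ := h2 E hE hf
  exact two_to_three h E G hG

end Statement
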